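/- Let 1 ≤ d ≤ 4 and m = binomial(d,2). Every nonnegative biquadratic form in d+d variables vanishing on the diagonal is a sum of squares of polynomials. Equivalently, for every c : ℝ^d → S^d with homogeneous degree-2 polynomial entries such that c(x) is positive semidefinite for all x and c(x)x = 0 for all x, there exist skew-symmetric matrices A_1, …, A_m ∈ ℝ^{d×d} with c(x) = Σ_{p=1}^m A_p x x^⊤ A_p^⊤ for all x ∈ ℝ^d. -/

import Mathlib

open Matrix

/-- A function `ℝ^d → ℝ` is (the evaluation of) a homogeneous polynomial of degree `k`. -/
def IsHomPolyFun (d k : ℕ) (f : (Fin d → ℝ) → ℝ) : Prop :=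
  ∃ P : MvPolynomial (Fin d) ℝ, P.IsHomogeneous k ∧ ∀ x, f x = MvPolynomial.eval x P

/-!
Write the biquadratic form as `R x y`. A null vector of a nonnegative quadratic form lies in its
radical, so `R x x = 0` makes `R` invariant under the shears of the pair `(x, y)`; these generate
`SL₂`, whence `R x y = R y x`. Moreover, the full polarization `T` of `R` satisfies
`T x y x y = -R x y / 2`. Evaluating the quadratic form `∑ i j, T eᵢ eⱼ (W i) (W j)` at the
skew-symmetric matrix `W = x yᵀ - y xᵀ` then gives `3 R x y`: the form `R` is a quadratic form on
skew-symmetric matrices restricted to the matrices `x yᵀ - y xᵀ`.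

For `d ≤ 3` every skew-symmetric matrix is of this shape; for `d = 4` these matrices are the zeros
of the Pfaffian, an indefinite quadratic form, and the S-lemma makes the quadratic form nonnegative
everywhere by adding a multiple of the Pfaffian. A nonnegative quadratic form on a space of
dimension `d.choose 2` is a sum of that many squares of linear functionals, and a linear functional
of `x yᵀ - y xᵀ` is `yᵀ A x` with `A` skew-symmetric.
-/

open LieAlgebra.Orthogonal
open QuadraticMap (polar associated)

theorem quadraticForm_map_add_smul {K V : Type*} [CommRing K] [AddCommGroup V] [Module K V]
    (q : QuadraticForm K V) (u v : V) (t : K) :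
    q (u + t • v) = q u + t * polar q u v + t ^ 2 * q v := by
  rw [QuadraticMap.map_add q, q.map_smul, q.polar_smul_right, smul_eq_mul, smul_eq_mul]
  ring

section RealQuadraticForm

variable {E : Type*} [AddCommGroup E] [Module ℝ E]

theorem exists_neg_root_pos_root {a b c : ℝ} (ha : a < 0) (hc : 0 < c) :
    ∃ r s : ℝ, r < 0 ∧ 0 < s ∧ c + r * b + r ^ 2 * a = 0 ∧ c + s * b + s ^ 2 * a = 0 ∧
      r * s * a = c := by
  have hdisc : b ^ 2 < b ^ 2 - 4 * a * c := by nlinarith [mul_neg_of_neg_of_pos ha hc]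
  obtain ⟨σ, hσ, hσ_sq⟩ : ∃ σ : ℝ, 0 ≤ σ ∧ σ ^ 2 = b ^ 2 - 4 * a * c :=
    ⟨_, Real.sqrt_nonneg _, Real.sq_sqrt ((sq_nonneg b).trans hdisc.le)⟩
  obtain ⟨hneg, hpos⟩ := abs_lt.1 (abs_lt_of_sq_lt_sq (hdisc.trans_eq hσ_sq.symm) hσ)
  have ha' : a ≠ 0 := ha.ne
  refine ⟨(-b + σ) / (2 * a), (-b - σ) / (2 * a), div_neg_of_pos_of_neg (by linarith) (by linarith),
    div_pos_of_neg_of_neg (by linarith) (by linarith), ?_, ?_, ?_⟩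
  all_goals field_simp
  · linear_combination hσ_sq
  · linear_combination hσ_sq
  · linear_combination -hσ_sq

theorem div_le_div_of_nonneg_on_zeros {p q : QuadraticForm ℝ E} (h : ∀ w, p w = 0 → 0 ≤ q w)
    {u v : E} (hu : 0 < p u) (hv : p v < 0) : q v / p v ≤ q u / p u := by
  obtain ⟨r, s, hr, hs, hpr, hps, hrs⟩ := exists_neg_root_pos_root (b := polar p u v) hv hu
  have hqr := h (u + r • v) (by rw [quadraticForm_map_add_smul, hpr])
  have hqs := h (u + s • v) (by rw [quadraticForm_map_add_smul, hps])
  rw [quadraticForm_map_add_smul] at hqr hqs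
  -- The weights `s` and `-r` are positive and eliminate the polar term.
  have hprod : 0 ≤ (s - r) * (q u - r * s * q v) :=
    calc 0 ≤ s * (q u + r * polar q u v + r ^ 2 * q v)
          + -r * (q u + s * polar q u v + s ^ 2 * q v) :=
        add_nonneg (mul_nonneg hs.le hqr) (mul_nonneg (neg_nonneg.2 hr.le) hqs)
      _ = _ := by ring
  have hle : r * s * q v ≤ q u :=
    sub_nonneg.1 (nonneg_of_mul_nonneg_right hprod (by linarith))
  rw [le_div_iff₀ hu, ← hrs]
  calc q v / p v * (r * s * p v) = r * s * q v := by field_simp [hv.ne]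
    _ ≤ q u := hle

theorem exists_forall_nonneg_add_smul {p q : QuadraticForm ℝ E} (hpos : ∃ u, 0 < p u)
    (hneg : ∃ v, p v < 0) (h : ∀ w, p w = 0 → 0 ≤ q w) : ∃ l : ℝ, ∀ w, 0 ≤ (q + l • p) w := by
  obtain ⟨m, hm_ge, hm_le⟩ := exists_between_of_forall_le
    (s := (fun v ↦ q v / p v) '' {v | p v < 0}) (t := (fun u ↦ q u / p u) '' {u | 0 < p u})
    (Set.Nonempty.image _ hneg) (Set.Nonempty.image _ hpos) (by
      rintro _ ⟨v, hv, rfl⟩ _ ⟨u, hu, rfl⟩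
      exact div_le_div_of_nonneg_on_zeros h hu hv)
  refine ⟨-m, fun w ↦ ?_⟩
  simp only [_root_.add_apply, _root_.smul_apply, smul_eq_mul]
  rcases lt_trichotomy (p w) 0 with hw | hw | hw
  · have := (div_le_iff_of_neg hw).1 (hm_ge ⟨w, hw, rfl⟩)
    linarith
  · simpa [hw] using h w hw
  · have := (le_div_iff₀ hw).1 (hm_le ⟨w, hw, rfl⟩)
    linarith

theorem exists_eq_sum_sq_of_nonneg [FiniteDimensional ℝ E] {m : ℕ} (hm : Module.finrank ℝ E = m)
    {Q : QuadraticForm ℝ E} (hQ : ∀ v, 0 ≤ Q v) :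
    ∃ ℓ : Fin m → E →ₗ[ℝ] ℝ, ∀ v, Q v = ∑ p, ℓ p v ^ 2 := by
  subst hm
  obtain ⟨w, ⟨e⟩⟩ := Q.equivalent_weightedSumSquares
  have hw : ∀ p, 0 ≤ w p := fun p ↦ by
    have := hQ (e.symm (Pi.single p 1))
    rw [e.symm.map_app] at this
    simpa [QuadraticMap.weightedSumSquares_apply, Pi.single_apply] using this
  refine ⟨fun p ↦ √(w p) • (LinearMap.proj p).comp e.toLinearEquiv.toLinearMap, fun v ↦ ?_⟩
  rw [← e.map_app, QuadraticMap.weightedSumSquares_apply]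
  refine Finset.sum_congr rfl fun p _ ↦ ?_
  calc w p * (e v p * e v p) = √(w p) ^ 2 * e v p ^ 2 := by
        rw [Real.sq_sqrt (hw p), pow_two (e v p)]
    _ = (√(w p) * e v p) ^ 2 := (mul_pow ..).symm

end RealQuadraticForm

theorem quadraticForm_map_add_of_map_eq_zero {K V : Type*} [Field K] [LinearOrder K]
    [IsStrictOrderedRing K] [AddCommGroup V] [Module K V] {q : QuadraticForm K V}
    (hq : ∀ v, 0 ≤ q v) {u : V} (hu : q u = 0) (v : V) : q (u + v) = q v := by
  have hself : ∀ w, associated q w w = q w := q.associated_eq_self_apply K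
  have hcauchy : associated q u v ^ 2 ≤ associated q u u * associated q v v :=
    LinearMap.BilinForm.apply_sq_le_of_symm _ (fun w ↦ (hself w).symm ▸ hq w)
      (QuadraticForm.associated_isSymm K q) u v
  have hortho : associated q u v = 0 := by
    rwa [hself, hu, zero_mul, sq_nonpos_iff] at hcauchy
  have hpolar : polar q u v = 0 := by
    rw [← q.polarBilin_apply_apply, ← q.two_nsmul_associated K, LinearMap.smul_apply,
      LinearMap.smul_apply, hortho, smul_zero]
  rw [QuadraticMap.map_add q, hu, hpolar, zero_add, add_zero]

/-- Biquadratic forms on `V × V`: `R x y` is quadratic in `y` for fixed `x`, and in `x` for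
fixed `y`. -/
abbrev BiquadraticForm (K V : Type*) [CommRing K] [AddCommGroup V] [Module K V] : Type _ :=
  QuadraticMap K V (QuadraticForm K V)

namespace BiquadraticForm

section Separately

variable {K V : Type*} [CommRing K] [AddCommGroup V] [Module K V]

theorem exists_of_separately_quadratic {f : V → V → K}
    (hleft : ∀ y, ∃ q : QuadraticForm K V, ∀ x, f x y = q x)
    (hright : ∀ x, ∃ q : QuadraticForm K V, ∀ y, f x y = q y) :
    ∃ R : BiquadraticForm K V, ∀ x y, f x y = R x y := by
  choose l hl using hleft
  choose r hr using hright
  have polar_r (x z y : V) : polar r x z y = polar (l y) x z := by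
    simp only [polar, _root_.sub_apply, ← hr, hl]
  refine ⟨.ofPolar r (fun a x ↦ ?_) (fun x x' z ↦ ?_) (fun a x z ↦ ?_), hr⟩ <;> ext y
  · rw [_root_.smul_apply, ← hr, ← hr, hl, hl, (l y).map_smul]
  · rw [_root_.add_apply, polar_r, polar_r, polar_r, (l y).polar_add_left]
  · rw [_root_.smul_apply, polar_r, polar_r, (l y).polar_smul_left]

/-- The quadratic form `x ↦ R x y`, for fixed `y`. -/
def leftForm (R : BiquadraticForm K V) (y : V) : QuadraticForm K V :=
  LinearMap.compQuadraticMap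
    { toFun := fun q ↦ q y, map_add' := fun _ _ ↦ rfl, map_smul' := fun _ _ ↦ rfl } R

@[simp]
theorem leftForm_apply (R : BiquadraticForm K V) (x y : V) : R.leftForm y x = R x y := rfl

end Separately

section Polarization

variable {K V : Type*} [CommRing K] [Invertible (2 : K)] [AddCommGroup V] [Module K V]

/-- The full polarization of `R`: the form `T x z y w`, linear in each argument and symmetric under
both `x ↔ z` and `y ↔ w`, with `T x x y y = R x y`. -/
def polarization (R : BiquadraticForm K V) : V →ₗ[K] V →ₗ[K] LinearMap.BilinForm K V :=
  (associated R).compr₂ associated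

theorem polarization_self (R : BiquadraticForm K V) (x y : V) :
    R.polarization x x y y = R x y := by
  rw [polarization, LinearMap.compr₂_apply, QuadraticMap.associated_eq_self_apply,
    QuadraticMap.associated_eq_self_apply]

theorem polarization_left_comm (R : BiquadraticForm K V) (x z y w : V) :
    R.polarization x z y w = R.polarization z x y w := by
  simp only [polarization, LinearMap.compr₂_apply, QuadraticMap.associated_isSymm K R x z]

theorem polarization_right_comm (R : BiquadraticForm K V) (x z y w : V) :
    R.polarization x z y w = R.polarization x z w y :=
  QuadraticMap.associated_isSymm K _ y w

theorem polarization_cross {R : BiquadraticForm K V} (hdiag : ∀ x, R x x = 0) (x y : V) :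
    4 * R.polarization x y x y = -(R x y + R y x) := by
  have hadd := hdiag (x + y)
  have hsub := hdiag (x + (-1 : K) • y)
  have hx := hdiag x
  have hy := hdiag y
  simp only [← polarization_self, map_add, map_smul, LinearMap.add_apply, LinearMap.smul_apply,
    smul_eq_mul, polarization_left_comm R y x, polarization_right_comm R _ _ y x]
    at hadd hsub hx hy ⊢
  linear_combination ⅟2 * (hadd + hsub) - hx - hy - (4 * R.polarization x y x y
    + R.polarization x x y y + R.polarization y y x x + R.polarization x x x x
    + R.polarization y y y y) * invOf_mul_self (2 : K)

end Polarization

section OrderedField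

variable {K V : Type*} [Field K] [LinearOrder K] [IsStrictOrderedRing K]
  [AddCommGroup V] [Module K V]

variable {R : BiquadraticForm K V}

theorem apply_self_add_right (hnonneg : ∀ x y, 0 ≤ R x y) (hdiag : ∀ x, R x x = 0) (x y : V) :
    R x (x + y) = R x y :=
  quadraticForm_map_add_of_map_eq_zero (hnonneg x) (hdiag x) y

theorem apply_self_add_left (hnonneg : ∀ x y, 0 ≤ R x y) (hdiag : ∀ x, R x x = 0) (x y : V) :
    R (y + x) y = R x y :=
  quadraticForm_map_add_of_map_eq_zero (q := R.leftForm y) (fun x ↦ hnonneg x y) (hdiag y) x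

theorem apply_comm (hnonneg : ∀ x y, 0 ≤ R x y) (hdiag : ∀ x, R x x = 0) (x y : V) :
    R x y = R y x :=
  calc R x y = R x (x + y) := (apply_self_add_right hnonneg hdiag x y).symm
    _ = R (-y) (x + y) := by simpa using apply_self_add_left hnonneg hdiag (-y) (x + y)
    _ = R (-y) x := by simpa using (apply_self_add_right hnonneg hdiag (-y) (x + y)).symm
    _ = R y x := by rw [QuadraticMap.map_neg]

end OrderedField

end BiquadraticForm

section Wedge

theorem exists_bilinForm_vecMulVec {n K : Type*} [Finite n] [CommRing K]
    (T : (n → K) →ₗ[K] (n → K) →ₗ[K] LinearMap.BilinForm K (n → K)) :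
    ∃ B : LinearMap.BilinForm K (Matrix n n K),
      ∀ a b c d, B (vecMulVec a b) (vecMulVec c d) = T a c b d := by
  classical
  cases nonempty_fintype n
  let row (i : n) : Matrix n n K →ₗ[K] n → K :=
    (LinearMap.proj i).comp (Matrix.ofLinearEquiv K).symm.toLinearMap
  refine ⟨∑ i, ∑ j, (T (Pi.single i 1) (Pi.single j 1)).compl₁₂ (row i) (row j),
    fun a b c d ↦ ?_⟩
  have hrow (x y : n → K) (i : n) : row i (vecMulVec x y) = x i • y := rfl
  conv_rhs => rw [pi_eq_sum_univ' a, pi_eq_sum_univ' c]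
  simp only [LinearMap.sum_apply, LinearMap.compl₁₂_apply, hrow, map_sum, map_smul,
    LinearMap.smul_apply, Finset.smul_sum]
  exact Finset.sum_comm

attribute [local instance] LieRing.ofAssociativeRing

variable {n K : Type*} [Fintype n] [DecidableEq n]

section CommRing

variable [CommRing K]

/-- The wedge product `x ∧ y` of two vectors, encoded as the skew-symmetric matrix
`x yᵀ - y xᵀ`. -/
def wedge : (n → K) →ₗ[K] (n → K) →ₗ[K] so n K :=
  LinearMap.mk₂ K
    (fun x y ↦ ⟨vecMulVec x y - vecMulVec y x, by
      rw [mem_so, transpose_sub, transpose_vecMulVec, transpose_vecMulVec, neg_sub]⟩)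
    (fun x x' y ↦ Subtype.ext (by
      simp only [AddMemClass.mk_add_mk, add_vecMulVec, vecMulVec_add]
      abel))
    (fun a x y ↦ Subtype.ext (by simp [smul_vecMulVec, vecMulVec_smul, smul_sub]))
    (fun x y y' ↦ Subtype.ext (by
      simp only [AddMemClass.mk_add_mk, add_vecMulVec, vecMulVec_add]
      abel))
    (fun a x y ↦ Subtype.ext (by simp [smul_vecMulVec, vecMulVec_smul, smul_sub]))

theorem coe_wedge (x y : n → K) :
    (wedge x y : Matrix n n K) = vecMulVec x y - vecMulVec y x := rfl

theorem wedge_apply (x y : n → K) (i j : n) :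
    (wedge x y).1 i j = x i * y j - y i * x j := rfl

theorem wedge_swap (x y : n → K) : wedge y x = -wedge x y :=
  Subtype.ext (neg_sub _ _).symm

theorem so_apply_swap (W : so n K) (i j : n) : W.1 j i = -W.1 i j :=
  congrFun₂ ((mem_so _ _ _).1 W.2) i j

/-- The quadratic form whose vanishing is the Plücker relation on the indices `v 0, …, v 3`. It is
the Pfaffian of the `4 × 4` matrix formed by the entries of a skew-symmetric matrix at these
indices. -/
def pluckerForm (v : Fin 4 → n) : QuadraticForm K (so n K) :=
  let entry (i j : Fin 4) : so n K →ₗ[K] K :=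
    (entryLinearMap K K (v i) (v j)).comp ((so n K).incl : so n K →ₗ[K] Matrix n n K)
  .linMulLin (entry 0 1) (entry 2 3) - .linMulLin (entry 0 2) (entry 1 3)
    + .linMulLin (entry 0 3) (entry 1 2)

theorem pluckerForm_apply (v : Fin 4 → n) (W : so n K) :
    pluckerForm v W = W.1 (v 0) (v 1) * W.1 (v 2) (v 3) - W.1 (v 0) (v 2) * W.1 (v 1) (v 3)
      + W.1 (v 0) (v 3) * W.1 (v 1) (v 2) := rfl

theorem pluckerForm_wedge (v : Fin 4 → n) (x y : n → K) : pluckerForm v (wedge x y) = 0 := by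
  simp only [pluckerForm_apply, wedge_apply]
  ring

theorem pluckerForm_comp_swap (v : Fin 4 → n) {i j : Fin 4} (hij : i ≠ j) (W : so n K) :
    pluckerForm (v ∘ Equiv.swap i j) W = -pluckerForm v W := by
  fin_cases i <;> fin_cases j <;> grind [pluckerForm_apply, so_apply_swap]

theorem pluckerForm_comp_perm_eq_zero {v : Fin 4 → n} {W : so n K} (h : pluckerForm v W = 0)
    (σ : Equiv.Perm (Fin 4)) : pluckerForm (v ∘ σ) W = 0 := by
  induction σ using Equiv.Perm.swap_induction_on' with
  | one => exact h
  | mul_swap σ i j hij ih => rw [Equiv.Perm.coe_mul, ← Function.comp_assoc,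
      pluckerForm_comp_swap _ hij, ih, neg_zero]

theorem pluckerForm_eq_zero_of_not_injective [IsAddTorsionFree K] {v : Fin 4 → n}
    (hv : ¬ Function.Injective v) (W : so n K) : pluckerForm v W = 0 := by
  obtain ⟨i, j, hvij, hij⟩ := Function.not_injective_iff.1 hv
  have hswap : v ∘ Equiv.swap i j = v := funext (Equiv.apply_swap_eq_self hvij)
  rw [← self_eq_neg, ← pluckerForm_comp_swap v hij, hswap]

end CommRing

section Field

variable [Field K]

theorem exists_wedge_eq_of_pluckerForm_eq_zero {W : so n K} (h : ∀ v, pluckerForm v W = 0) :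
    ∃ x y, wedge x y = W := by
  by_cases hW : W = 0
  · exact ⟨0, 0, by simp [hW]⟩
  obtain ⟨a, b, hab⟩ : ∃ a b, W.1 a b ≠ 0 := by
    contrapose! hW
    exact Subtype.ext (Matrix.ext hW)
  refine ⟨fun k ↦ W.1 k b / W.1 a b, fun l ↦ W.1 a l, Subtype.ext <| Matrix.ext fun k l ↦ ?_⟩
  have hplucker := h ![a, b, k, l]
  simp only [pluckerForm_apply, cons_val] at hplucker
  rw [so_apply_swap W k b, so_apply_swap W l b] at hplucker
  rw [wedge_apply]
  field_simp
  linear_combination -hplucker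

variable [CharZero K]

theorem exists_wedge_eq_of_le_three {d : ℕ} (hd : d ≤ 3) (W : so (Fin d) K) :
    ∃ x y, wedge x y = W := by
  refine exists_wedge_eq_of_pluckerForm_eq_zero fun v ↦
    pluckerForm_eq_zero_of_not_injective (fun hv ↦ ?_) W
  have := Fintype.card_le_of_injective v hv
  simp only [Fintype.card_fin] at this
  omega

theorem exists_wedge_eq_of_pluckerForm_id_eq_zero {W : so (Fin 4) K} (hW : pluckerForm id W = 0) :
    ∃ x y, wedge x y = W := by
  refine exists_wedge_eq_of_pluckerForm_eq_zero fun v ↦ ?_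
  by_cases hv : Function.Injective v
  · exact pluckerForm_comp_perm_eq_zero hW
      (Equiv.ofBijective v (Finite.injective_iff_bijective.1 hv))
  · exact pluckerForm_eq_zero_of_not_injective hv W

end Field

theorem finrank_so (K : Type*) [Field K] [CharZero K] (d : ℕ) :
    Module.finrank K (so (Fin d) K) = d.choose 2 := by
  let lowerEntries : so (Fin d) K →ₗ[K] (i : Fin d) → Fin i → K :=
    LinearMap.pi fun i ↦ LinearMap.pi fun j ↦
      (entryLinearMap K K i (j.castLE i.2.le)).comp
        ((so (Fin d) K).incl : so (Fin d) K →ₗ[K] Matrix (Fin d) (Fin d) K)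
  have hinj : Function.Injective lowerEntries := by
    rw [injective_iff_map_eq_zero]
    intro W hW
    have hlower : ∀ i j, j < i → W.1 i j = 0 := fun i j hji ↦ congrFun₂ hW i ⟨j, hji⟩
    refine Subtype.ext (Matrix.ext fun i j ↦ ?_)
    rcases lt_trichotomy i j with hij | rfl | hji
    · rw [so_apply_swap W j i, hlower j i hij, neg_zero]; rfl
    · exact self_eq_neg.1 (so_apply_swap W i i)
    · exact hlower i j hji
  have hsurj : Function.Surjective lowerEntries := fun f ↦ by
    let L : Matrix (Fin d) (Fin d) K := .of fun i j ↦ if h : j < i then f i ⟨j, h⟩ else 0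
    refine ⟨⟨L - Lᵀ, by rw [mem_so, transpose_sub, transpose_transpose, neg_sub]⟩, ?_⟩
    ext i j
    have hji : j.castLE i.2.le < i := j.2
    simp [lowerEntries, L, hji, hji.not_gt]
  rw [(LinearEquiv.ofBijective lowerEntries ⟨hinj, hsurj⟩).finrank_eq, Module.finrank_pi_fintype]
  simp only [Module.finrank_fin_fun]
  rw [Fin.sum_univ_eq_sum_range (fun i ↦ i), Finset.sum_range_id, Nat.choose_two_right]

section OrderedField

variable [Field K] [LinearOrder K] [IsStrictOrderedRing K]

theorem BiquadraticForm.exists_quadraticForm_wedge {R : BiquadraticForm K (n → K)}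
    (hnonneg : ∀ x y, 0 ≤ R x y) (hdiag : ∀ x, R x x = 0) :
    ∃ q : QuadraticForm K (so n K), ∀ x y, q (wedge x y) = R x y := by
  obtain ⟨B, hB⟩ := exists_bilinForm_vecMulVec R.polarization
  refine ⟨(3⁻¹ : K) • B.toQuadraticMap.comp ((so n K).incl : so n K →ₗ[K] Matrix n n K),
    fun x y ↦ ?_⟩
  have hcross_xy := BiquadraticForm.polarization_cross hdiag x y
  have hcross_yx := BiquadraticForm.polarization_cross hdiag y x
  rw [BiquadraticForm.apply_comm hnonneg hdiag y x] at hcross_xy hcross_yx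
  have hexpand : B (wedge x y) (wedge x y) = 3 * R x y :=
    calc B (wedge x y) (wedge x y)
        = R.polarization x x y y - R.polarization x y y x
          - (R.polarization y x x y - R.polarization y y x x) := by
          simp only [coe_wedge, map_sub, LinearMap.sub_apply, hB]
          ring
      _ = R x y + R x y - R.polarization x y x y - R.polarization y x y x := by
          rw [R.polarization_self, R.polarization_self, R.polarization_right_comm x y y x,
            R.polarization_right_comm y x x y, BiquadraticForm.apply_comm hnonneg hdiag y x]
          ring
      _ = 3 * R x y := by linarith
  calc (3⁻¹ : K) * B (wedge x y) (wedge x y) = R x y := by rw [hexpand]; ring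

theorem pluckerForm_id_indefinite :
    (∃ W : so (Fin 4) K, 0 < pluckerForm id W) ∧ ∃ W : so (Fin 4) K, pluckerForm id W < 0 := by
  refine ⟨⟨wedge ![1, 0, 0, 0] ![0, 1, 0, 0] + wedge ![0, 0, 1, 0] ![0, 0, 0, 1], ?_⟩,
    ⟨wedge ![1, 0, 0, 0] ![0, 1, 0, 0] - wedge ![0, 0, 1, 0] ![0, 0, 0, 1], ?_⟩⟩ <;>
  simp [pluckerForm_apply, wedge_apply]

end OrderedField

theorem exists_nonneg_eq_on_wedge {d : ℕ} (hd : d ≤ 4) {q : QuadraticForm ℝ (so (Fin d) ℝ)}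
    (hq : ∀ x y, 0 ≤ q (wedge x y)) :
    ∃ Q : QuadraticForm ℝ (so (Fin d) ℝ),
      (∀ W, 0 ≤ Q W) ∧ ∀ x y, Q (wedge x y) = q (wedge x y) := by
  rcases Nat.lt_or_eq_of_le hd with hlt | rfl
  · refine ⟨q, fun W ↦ ?_, fun _ _ ↦ rfl⟩
    obtain ⟨x, y, rfl⟩ := exists_wedge_eq_of_le_three (Nat.lt_succ_iff.1 hlt) W
    exact hq x y
  · obtain ⟨l, hl⟩ := exists_forall_nonneg_add_smul pluckerForm_id_indefinite.1
      pluckerForm_id_indefinite.2 (q := q) fun W hW ↦ by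
        obtain ⟨x, y, rfl⟩ := exists_wedge_eq_of_pluckerForm_id_eq_zero hW
        exact hq x y
    refine ⟨q + l • pluckerForm id, hl, fun x y ↦ ?_⟩
    rw [_root_.add_apply, _root_.smul_apply, pluckerForm_wedge, smul_zero, add_zero]

theorem exists_skew_sum_sq {d : ℕ} (hd : d ≤ 4) {f : (Fin d → ℝ) → (Fin d → ℝ) → ℝ}
    (hleft : ∀ y, ∃ q : QuadraticForm ℝ (Fin d → ℝ), ∀ x, f x y = q x)
    (hright : ∀ x, ∃ q : QuadraticForm ℝ (Fin d → ℝ), ∀ y, f x y = q y)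
    (hnonneg : ∀ x y, 0 ≤ f x y) (hdiag : ∀ x, f x x = 0) :
    ∃ A : Fin (d.choose 2) → Matrix (Fin d) (Fin d) ℝ,
      (∀ p, (A p)ᵀ = -A p) ∧ ∀ x y, f x y = ∑ p, (y ⬝ᵥ A p *ᵥ x) ^ 2 := by
  obtain ⟨R, hR⟩ := BiquadraticForm.exists_of_separately_quadratic hleft hright
  simp only [hR] at hnonneg hdiag ⊢
  obtain ⟨q, hq⟩ := BiquadraticForm.exists_quadraticForm_wedge hnonneg hdiag
  obtain ⟨Q, hQ, hQq⟩ := exists_nonneg_eq_on_wedge hd fun x y ↦ (hq x y).symm ▸ hnonneg x y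
  obtain ⟨ℓ, hℓ⟩ := exists_eq_sum_sq_of_nonneg (finrank_so ℝ d) hQ
  refine ⟨fun p ↦ LinearMap.toMatrix₂' ℝ (wedge.compr₂ (ℓ p)), fun p ↦ ?_, fun x y ↦ ?_⟩
  · ext i j
    change ℓ p (wedge (Pi.single j 1) (Pi.single i 1))
      = -ℓ p (wedge (Pi.single i 1) (Pi.single j 1))
    rw [wedge_swap, map_neg]
  · rw [BiquadraticForm.apply_comm hnonneg hdiag, ← hq, ← hQq, hℓ]
    refine Finset.sum_congr rfl fun p _ ↦ ?_
    rw [← toLinearMap₂'_apply', toLinearMap₂'_toMatrix', LinearMap.compr₂_apply]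

end Wedge

section Polynomial

section CommRing

variable {K : Type*} [CommRing K]

theorem toQuadraticForm'_apply {n : Type*} [Fintype n] [DecidableEq n] (M : Matrix n n K)
    (x : n → K) : M.toQuadraticForm' x = x ⬝ᵥ M *ᵥ x := by
  rw [toQuadraticForm', LinearMap.BilinMap.toQuadraticMap_apply, toLinearMap₂'_apply']

theorem exists_quadraticForm_dotProduct_mulVec {n V : Type*} [Fintype n] [AddCommGroup V]
    [Module K V] {c : V → Matrix n n K}
    (hc : ∀ i j, ∃ q : QuadraticForm K V, ∀ x, c x i j = q x) (y : n → K) :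
    ∃ q : QuadraticForm K V, ∀ x, y ⬝ᵥ c x *ᵥ y = q x := by
  choose q hq using hc
  refine ⟨∑ i, ∑ j, (y i * y j) • q i j, fun x ↦ ?_⟩
  simp only [dotProduct, mulVec, Finset.mul_sum, hq, _root_.sum_apply, _root_.smul_apply,
    smul_eq_mul]
  exact Finset.sum_congr rfl fun i _ ↦ Finset.sum_congr rfl fun j _ ↦ by ring

theorem isSymm_mul_vecMulVec_self_mul_transpose {n : Type*} [Fintype n] (A : Matrix n n K)
    (x : n → K) : (A * vecMulVec x x * Aᵀ).IsSymm := by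
  rw [IsSymm, transpose_mul, transpose_mul, transpose_transpose, transpose_vecMulVec,
    Matrix.mul_assoc]

theorem dotProduct_mul_vecMulVec_self_mul_transpose_mulVec {n : Type*} [Fintype n]
    (A : Matrix n n K) (x y : n → K) :
    y ⬝ᵥ (A * vecMulVec x x * Aᵀ) *ᵥ y = (y ⬝ᵥ A *ᵥ x) ^ 2 := by
  rw [mul_vecMulVec, vecMulVec_mul, vecMul_transpose, vecMulVec_mulVec, dotProduct_comm _ y]
  simp [pow_two]

theorem exists_eval_sumElim_eq_dotProduct_mulVec {n : Type*} [Fintype n] (A : Matrix n n K) :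
    ∃ f : MvPolynomial (n ⊕ n) K, ∀ x y, f.eval (Sum.elim x y) = y ⬝ᵥ A *ᵥ x :=
  ⟨∑ i, .X (.inr i) * ∑ j, .C (A i j) * .X (.inl j), fun x y ↦ by
    simp [dotProduct, mulVec]⟩

end CommRing

section Field

variable {K : Type*} [Field K] [NeZero (2 : K)]

open MvPolynomial (eval pderiv) in
theorem exists_quadraticForm_eq_eval {σ : Type*} [Finite σ] {P : MvPolynomial σ K}
    (hP : P.IsHomogeneous 2) :
    ∃ q : QuadraticForm K (σ → K), ∀ x, eval x P = q x := by
  classical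
  cases nonempty_fintype σ
  have hconst (i j : σ) : ∃ a : K, pderiv j (pderiv i P) = .C a :=
    ⟨_, MvPolynomial.totalDegree_eq_zero_iff_eq_C.1
      ((MvPolynomial.totalDegree_zero_iff_isHomogeneous _).2 hP.pderiv.pderiv)⟩
  choose hessian hhessian using hconst
  have heuler_pderiv (x : σ → K) (i : σ) : eval x (pderiv i P) = (of hessian *ᵥ x) i := by
    have := congrArg (eval x) (hP.pderiv (i := i)).sum_X_mul_pderiv
    simpa [hhessian, mulVec, dotProduct, mul_comm] using this.symm
  have heuler (x : σ → K) : x ⬝ᵥ of hessian *ᵥ x = 2 * eval x P := by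
    have := congrArg (eval x) hP.sum_X_mul_pderiv
    simpa [heuler_pderiv, dotProduct] using this
  refine ⟨(2⁻¹ : K) • (of hessian).toQuadraticForm', fun x ↦ ?_⟩
  rw [_root_.smul_apply, toQuadraticForm'_apply, heuler, smul_eq_mul,
    inv_mul_cancel_left₀ two_ne_zero]

theorem eq_of_isSymm_of_dotProduct_mulVec_self {n : Type*} [Fintype n] {M N : Matrix n n K}
    (hM : M.IsSymm) (hN : N.IsSymm) (h : ∀ y, y ⬝ᵥ M *ᵥ y = y ⬝ᵥ N *ᵥ y) :
    M = N := by
  classical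
  have hbilin {A : Matrix n n K} (hA : A.IsSymm) :
      LinearMap.BilinForm.IsSymm (toLinearMap₂' K A) := ⟨fun x y ↦ by
    rw [toLinearMap₂'_apply', toLinearMap₂'_apply', dotProduct_mulVec, ← mulVec_transpose, hA.eq,
      dotProduct_comm]⟩
  refine (toLinearMap₂' K).injective
    (LinearMap.BilinForm.ext_of_isSymm (hbilin hM) (hbilin hN) fun y ↦ ?_)
  rw [toLinearMap₂'_apply', toLinearMap₂'_apply', h]

end Field

end Polynomial

/-- For `1 ≤ d ≤ 4`: every nonnegative biquadratic form in `d+d` variables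
vanishing on the diagonal is a sum of squares of polynomials; equivalently, every
`c : ℝ^d → S^d` with homogeneous degree-2 polynomial entries such that `c(x)` is positive
semidefinite for all `x` and `c(x) x = 0` for all `x` can be written as
`c(x) = ∑_{p=1}^m A_p x xᵀ A_pᵀ` with `m = choose d 2` skew-symmetric matrices `A_p`. -/
theorem stmt8 (d : ℕ) (hd1 : 1 ≤ d) (hd4 : d ≤ 4) :
    -- every nonnegative biquadratic form vanishing on the diagonal is a sum of squares
    (∀ BQ : (Fin d → ℝ) → (Fin d → ℝ) → ℝ,
      (∀ y : Fin d → ℝ, ∃ M : Matrix (Fin d) (Fin d) ℝ, ∀ x, BQ x y = x ⬝ᵥ M.mulVec x) →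
      (∀ x : Fin d → ℝ, ∃ M : Matrix (Fin d) (Fin d) ℝ, ∀ y, BQ x y = y ⬝ᵥ M.mulVec y) →
      (∀ x y, 0 ≤ BQ x y) → (∀ x, BQ x x = 0) →
      ∃ (n : ℕ) (f : Fin n → MvPolynomial (Fin d ⊕ Fin d) ℝ),
        ∀ x y : Fin d → ℝ,
          BQ x y = ∑ k, (MvPolynomial.eval (Sum.elim x y) (f k)) ^ 2) ∧
    -- equivalently, every `c ∈ C_+` has the representation `∑_p A_p x xᵀ A_pᵀ`
    (∀ c : (Fin d → ℝ) → Matrix (Fin d) (Fin d) ℝ,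
      (∀ x, (c x).IsSymm) →
      (∀ i j, IsHomPolyFun d 2 (fun x => c x i j)) →
      (∀ x, ∀ y : Fin d → ℝ, 0 ≤ y ⬝ᵥ (c x).mulVec y) →
      (∀ x, (c x).mulVec x = 0) →
      ∃ A : Fin (d.choose 2) → Matrix (Fin d) (Fin d) ℝ,
        (∀ p, (A p)ᵀ = -(A p)) ∧
        ∀ x, c x = ∑ p, A p * Matrix.vecMulVec x x * (A p)ᵀ) := by
  refine ⟨fun BQ hleft hright hnonneg hdiag ↦ ?_, fun c hsymm hpoly hpsd hker ↦ ?_⟩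
  · have hquad {g : (Fin d → ℝ) → ℝ} :
        (∃ M : Matrix (Fin d) (Fin d) ℝ, ∀ x, g x = x ⬝ᵥ M *ᵥ x) →
          ∃ q : QuadraticForm ℝ (Fin d → ℝ), ∀ x, g x = q x :=
      fun ⟨M, hM⟩ ↦ ⟨M.toQuadraticForm', fun x ↦ by rw [hM, toQuadraticForm'_apply]⟩
    obtain ⟨A, -, hA⟩ := exists_skew_sum_sq hd4 (fun y ↦ hquad (hleft y)) (fun x ↦ hquad (hright x))
      hnonneg hdiag
    choose f hf using fun p ↦ exists_eval_sumElim_eq_dotProduct_mulVec (A p)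
    exact ⟨_, f, fun x y ↦ by simp only [hA, hf]⟩
  · have hentry (i j : Fin d) : ∃ q : QuadraticForm ℝ (Fin d → ℝ), ∀ x, c x i j = q x := by
      obtain ⟨P, hP, hPc⟩ := hpoly i j
      simpa only [hPc] using exists_quadraticForm_eq_eval hP
    obtain ⟨A, hskew, hA⟩ := exists_skew_sum_sq hd4 (f := fun x y ↦ y ⬝ᵥ c x *ᵥ y)
      (exists_quadraticForm_dotProduct_mulVec hentry)
      (fun x ↦ ⟨(c x).toQuadraticForm', fun y ↦ (toQuadraticForm'_apply _ y).symm⟩)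
      hpsd (fun x ↦ by rw [hker, dotProduct_zero])
    refine ⟨A, hskew, fun x ↦ eq_of_isSymm_of_dotProduct_mulVec_self (hsymm x) ?_ fun y ↦ ?_⟩
    · simp only [IsSymm, transpose_sum, (isSymm_mul_vecMulVec_self_mul_transpose _ x).eq]
    · simp only [sum_mulVec, dotProduct_sum, dotProduct_mul_vecMulVec_self_mul_transpose_mulVec, hA]
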